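/- Let 𝒜 = {A_1, A_2, …} and 𝒞 = {C_1, C_2, …} be collections of subsets of ℝⁿ. For each k ≥ 1 define D_k = ⋃_{j≥k} C_j, and suppose that D_1 is bounded. If for every j ≥ 1 there exists a packing of 𝒜 into C_j, then there exists a packing of 𝒜 into the set ⋂_{k≥1} closure(D_k). -/

import Mathlib

/-!
Rigid motions of `ℝⁿ` that send a fixed point into a fixed bounded set form a relatively compact
set of pairs `(θ, ξ)`. Fix packings `(θⱼ, ξⱼ)` of `A` into `C j`. Taking limits of `θⱼ i` and `ξⱼ i`
along one nonprincipal ultrafilter on `ℕ` handles all indices `i` at once, so no diagonal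
subsequence is needed and `ι` may have any cardinality (`exists_limit_motion`). Empty members `A i`,
which do not constrain the translation, are placed by the identity.

For `x ∈ A i` the limit point `σ i x` is a limit of points `σⱼ i x ∈ C j`, hence lies in every
`closure (D k)`. If the interiors of `σ i (A i)` and `σ i' (A i')` met at `y`, then, rigid motions
being isometries, `y` would lie in the interiors of both `σⱼ i (A i)` and `σⱼ i' (A i')` for
almost all `j` (`eventually_mem_interior`), contradicting disjointness of the approximating
packings.
-/

open Pointwise

noncomputable section

/-- The rigid motion `(θ, ξ)` acting on a point of `ℝⁿ`: `x ↦ ξ + θx`. -/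
def rmApply {n : ℕ} (θ : Matrix (Fin n) (Fin n) ℝ) (ξ : EuclideanSpace ℝ (Fin n))
    (x : EuclideanSpace ℝ (Fin n)) : EuclideanSpace ℝ (Fin n) :=
  ξ + (EuclideanSpace.equiv (Fin n) ℝ).symm (θ.mulVec (EuclideanSpace.equiv (Fin n) ℝ x))

/-- `(θ, ξ)` is a packing of the family `A` into the set `C`: each `θ i` is orthogonal,
each repositioned set `σᵢ(Aᵢ)` is contained in `C`, and the repositioned sets have
pairwise disjoint interiors. -/
def IsPacking {n : ℕ} {ι : Type*} (A : ι → Set (EuclideanSpace ℝ (Fin n)))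
    (θ : ι → Matrix (Fin n) (Fin n) ℝ) (ξ : ι → EuclideanSpace ℝ (Fin n))
    (C : Set (EuclideanSpace ℝ (Fin n))) : Prop :=
  (∀ i, θ i ∈ Matrix.orthogonalGroup (Fin n) ℝ) ∧
  (∀ i, rmApply (θ i) (ξ i) '' A i ⊆ C) ∧
  Pairwise fun i j =>
    interior (rmApply (θ i) (ξ i) '' A i) ∩ interior (rmApply (θ j) (ξ j) '' A j) = ∅

/-- There exists a packing of `A` into `C`. -/
def PacksInto {n : ℕ} {ι : Type*} (A : ι → Set (EuclideanSpace ℝ (Fin n)))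
    (C : Set (EuclideanSpace ℝ (Fin n))) : Prop :=
  ∃ θ ξ, IsPacking A θ ξ C

open Filter Topology Metric

/-- A rigid motion of `ℝⁿ` is a bijective isometry. -/
lemma exists_isometryEquiv_rmApply {n : ℕ} {θ : Matrix (Fin n) (Fin n) ℝ}
    (hθ : θ ∈ Matrix.orthogonalGroup (Fin n) ℝ) (ξ : EuclideanSpace ℝ (Fin n)) :
    ∃ e : EuclideanSpace ℝ (Fin n) ≃ᵢ EuclideanSpace ℝ (Fin n), ⇑e = rmApply θ ξ := by
  have hu : Matrix.toEuclideanCLM (𝕜 := ℝ) θ ∈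
      unitary (EuclideanSpace ℝ (Fin n) →L[ℝ] EuclideanSpace ℝ (Fin n)) :=
    Unitary.map_mem (Matrix.toEuclideanCLM (n := Fin n) (𝕜 := ℝ)) hθ
  refine ⟨(Unitary.linearIsometryEquiv ⟨_, hu⟩).toIsometryEquiv.trans
    (IsometryEquiv.addLeft ξ), ?_⟩
  funext x
  rfl

lemma rmApply_zero {n : ℕ} (θ : Matrix (Fin n) (Fin n) ℝ) (ξ : EuclideanSpace ℝ (Fin n)) :
    rmApply θ ξ 0 = ξ := by
  simp [rmApply]

lemma tendsto_rmApply {n : ℕ} {α : Type*} {l : Filter α} {θ : α → Matrix (Fin n) (Fin n) ℝ}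
    {ξ : α → EuclideanSpace ℝ (Fin n)} {θ₀ : Matrix (Fin n) (Fin n) ℝ}
    {ξ₀ : EuclideanSpace ℝ (Fin n)} (hθ : Tendsto θ l (𝓝 θ₀)) (hξ : Tendsto ξ l (𝓝 ξ₀))
    (x : EuclideanSpace ℝ (Fin n)) :
    Tendsto (fun a => rmApply (θ a) (ξ a) x) l (𝓝 (rmApply θ₀ ξ₀ x)) := by
  have hc : Continuous fun M : Matrix (Fin n) (Fin n) ℝ =>
      (EuclideanSpace.equiv (Fin n) ℝ).symm (M.mulVec (EuclideanSpace.equiv (Fin n) ℝ x)) :=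
    (EuclideanSpace.equiv (Fin n) ℝ).symm.continuous.comp
      (continuous_id.matrix_mulVec continuous_const)
  exact hξ.add ((hc.tendsto θ₀).comp hθ)

lemma isCompact_orthogonalGroup (n : ℕ) :
    IsCompact (Matrix.orthogonalGroup (Fin n) ℝ : Set (Matrix (Fin n) (Fin n) ℝ)) := by
  have hbox : IsCompact (Set.univ.pi fun _ : Fin n => Set.univ.pi fun _ : Fin n =>
      Set.Icc (-1 : ℝ) 1) :=
    isCompact_univ_pi fun _ => isCompact_univ_pi fun _ => isCompact_Icc
  refine IsCompact.of_isClosed_subset (X := Fin n → Fin n → ℝ) hbox ?_ ?_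
  · have hc : IsClosed {M : Matrix (Fin n) (Fin n) ℝ | M * star M = 1} :=
      isClosed_eq (continuous_id.matrix_mul continuous_id.matrix_conjTranspose) continuous_const
    have heq : (Matrix.orthogonalGroup (Fin n) ℝ : Set (Matrix (Fin n) (Fin n) ℝ)) =
        {M | M * star M = 1} := by
      ext M
      exact Matrix.mem_orthogonalGroup_iff (Fin n) ℝ
    rw [heq]
    exact hc
  · intro M hM a _ b _
    have := entry_norm_bound_of_unitary (𝕜 := ℝ) (U := M) hM a b
    exact abs_le.mp this

/-- Rigid motions that send one point `a` into a bounded set converge along any ultrafilter. -/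
lemma exists_limit_motion {n : ℕ} (U : Ultrafilter ℕ) {θ : ℕ → Matrix (Fin n) (Fin n) ℝ}
    {ξ : ℕ → EuclideanSpace ℝ (Fin n)} (hθ : ∀ j, θ j ∈ Matrix.orthogonalGroup (Fin n) ℝ)
    {S : Set (EuclideanSpace ℝ (Fin n))} (hS : Bornology.IsBounded S)
    {a : EuclideanSpace ℝ (Fin n)} (ha : ∀ j, rmApply (θ j) (ξ j) a ∈ S) :
    ∃ θ₀ ∈ Matrix.orthogonalGroup (Fin n) ℝ, ∃ ξ₀,
      Tendsto θ U (𝓝 θ₀) ∧ Tendsto ξ U (𝓝 ξ₀) := by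
  obtain ⟨θ₀, hθ₀, hlimθ⟩ := (isCompact_orthogonalGroup n).ultrafilter_le_nhds' (U.map θ)
    (Filter.mem_map.mpr (Filter.univ_mem' hθ))
  obtain ⟨R, hR⟩ := hS.subset_closedBall 0
  have hξ : ∀ j, ξ j ∈ closedBall (0 : EuclideanSpace ℝ (Fin n)) (‖a‖ + R) := by
    intro j
    obtain ⟨e, he⟩ := exists_isometryEquiv_rmApply (hθ j) (ξ j)
    have h1 : dist (ξ j) (rmApply (θ j) (ξ j) a) = ‖a‖ := by
      nth_rewrite 1 [← rmApply_zero (θ j) (ξ j)]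
      rw [← he, e.dist_eq, dist_zero_left]
    have h2 := mem_closedBall.mp (hR (ha j))
    exact mem_closedBall.mpr ((dist_triangle _ _ _).trans (add_le_add h1.le h2))
  obtain ⟨ξ₀, -, hlimξ⟩ := (isCompact_closedBall (0 : EuclideanSpace ℝ (Fin n))
    (‖a‖ + R)).ultrafilter_le_nhds' (U.map ξ) (Filter.mem_map.mpr (Filter.univ_mem' hξ))
  exact ⟨θ₀, hθ₀, ξ₀, hlimθ, hlimξ⟩

/-- The preimage `a` of an interior point `y` of the limit set has a ball of some radius `r` around
it inside `A`. The approximating motions carry it to balls of the same radius whose centres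
tend to `y`. -/
lemma eventually_mem_interior {n : ℕ} {l : Filter ℕ} {θ : ℕ → Matrix (Fin n) (Fin n) ℝ}
    {ξ : ℕ → EuclideanSpace ℝ (Fin n)} {θ₀ : Matrix (Fin n) (Fin n) ℝ}
    {ξ₀ : EuclideanSpace ℝ (Fin n)} (hθ : ∀ j, θ j ∈ Matrix.orthogonalGroup (Fin n) ℝ)
    (hθ₀ : θ₀ ∈ Matrix.orthogonalGroup (Fin n) ℝ)
    (hlimθ : Tendsto θ l (𝓝 θ₀)) (hlimξ : Tendsto ξ l (𝓝 ξ₀))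
    {A : Set (EuclideanSpace ℝ (Fin n))} {y : EuclideanSpace ℝ (Fin n)}
    (hy : y ∈ interior (rmApply θ₀ ξ₀ '' A)) :
    ∀ᶠ j in l, y ∈ interior (rmApply (θ j) (ξ j) '' A) := by
  obtain ⟨e, he⟩ := exists_isometryEquiv_rmApply hθ₀ ξ₀
  rw [← he, ← e.coe_toHomeomorph, ← e.toHomeomorph.image_interior] at hy
  obtain ⟨a, ha, rfl⟩ := hy
  obtain ⟨r, hr, hball⟩ := Metric.isOpen_iff.mp isOpen_interior a ha
  have hlim := tendsto_rmApply hlimθ hlimξ a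
  filter_upwards [Metric.tendsto_nhds.mp hlim r hr] with j hj
  obtain ⟨f, hf⟩ := exists_isometryEquiv_rmApply (hθ j) (ξ j)
  rw [← hf, ← f.coe_toHomeomorph, ← f.toHomeomorph.image_interior]
  refine Set.image_mono hball ?_
  rw [f.coe_toHomeomorph, f.image_ball, mem_ball, e.coe_toHomeomorph, he, hf, dist_comm]
  exact hj

/-- **Lemma 1.** Let `A` and `C` be collections of subsets of `ℝⁿ` (with `C` a sequence),
let `D k = ⋃_{j ≥ k} C j`, and suppose `D 0` (hence every `D k`) is bounded. If `A` can
be packed into every `C j`, then `A` can be packed into `⋂ k, closure (D k)`. -/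
theorem packing_into_limsup {n : ℕ} {ι : Type*}
    (A : ι → Set (EuclideanSpace ℝ (Fin n)))
    (C : ℕ → Set (EuclideanSpace ℝ (Fin n)))
    (hbd : Bornology.IsBounded (⋃ j, C j))
    (h : ∀ j, PacksInto A (C j)) :
    PacksInto A (⋂ k, closure (⋃ j, ⋃ (_ : k ≤ j), C j)) := by
  choose θ ξ hθ hsub hdisj using h
  let U : Ultrafilter ℕ := hyperfilter ℕ
  have hU : ∀ k, ∀ᶠ j in (U : Filter ℕ), k ≤ j := fun k =>
    Nat.hyperfilter_le_atTop (eventually_ge_atTop k)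
  have hlim : ∀ i, ∃ θ₀ ∈ Matrix.orthogonalGroup (Fin n) ℝ, ∃ ξ₀, (A i).Nonempty →
      Tendsto (fun j => θ j i) U (𝓝 θ₀) ∧ Tendsto (fun j => ξ j i) U (𝓝 ξ₀) := by
    intro i
    by_cases hA : (A i).Nonempty
    · obtain ⟨a, ha⟩ := hA
      obtain ⟨θ₀, hθ₀, ξ₀, h⟩ := exists_limit_motion U (fun j => hθ j i) hbd
        (fun j => Set.mem_iUnion_of_mem j (hsub j i (Set.mem_image_of_mem _ ha)))
      exact ⟨θ₀, hθ₀, ξ₀, fun _ => h⟩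
    · exact ⟨1, one_mem _, 0, fun h => absurd h hA⟩
  choose θ₀ hθ₀ ξ₀ hconv using hlim
  refine ⟨θ₀, ξ₀, hθ₀, ?_, ?_⟩
  · rintro i _ ⟨x, hx, rfl⟩
    obtain ⟨h1, h2⟩ := hconv i ⟨x, hx⟩
    refine Set.mem_iInter.mpr fun k => mem_closure_of_tendsto (tendsto_rmApply h1 h2 x) ?_
    filter_upwards [hU k] with j hj
    exact Set.mem_iUnion₂_of_mem hj (hsub j i (Set.mem_image_of_mem _ hx))
  · intro i i' hii
    refine Set.eq_empty_iff_forall_notMem.mpr ?_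
    rintro y ⟨hy, hy'⟩
    obtain ⟨h1, h2⟩ := hconv i (Set.image_nonempty.mp ⟨y, interior_subset hy⟩)
    obtain ⟨h1', h2'⟩ := hconv i' (Set.image_nonempty.mp ⟨y, interior_subset hy'⟩)
    obtain ⟨j, hj, hj'⟩ := ((eventually_mem_interior (fun j => hθ j i) (hθ₀ i) h1 h2 hy).and
      (eventually_mem_interior (fun j => hθ j i') (hθ₀ i') h1' h2' hy')).exists
    exact Set.notMem_empty y (hdisj j hii ▸ ⟨hj, hj'⟩)
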